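/- Let F be a totally real number field of degree n over ℚ with real embeddings σ_1, …, σ_n : F → ℝ. Then for every real η > 0, the function ε ↦ ∏_{i=1}^{n} max(1, |σ_i(ε)|)^{-η} is summable over the unit group 𝓞_F^× of the ring of integers; equivalently, the sum over all units ε of ∏_{i : |σ_i(ε)| > 1} |σ_i(ε)|^{-η} is finite. -/

import Mathlib

open NumberField

/-! For a unit `ε`, the numbers `mult w * log (w ε)`, with `w` running over the infinite places,
sum to zero, so each of them is bounded in absolute value by the sum of their positive parts, which
is `∑ φ, log⁺ ‖φ ε‖`. Hence `∏ φ, max 1 ‖φ ε‖ ^ (-η) ≤ exp (-η * ‖logEmbedding ε‖)`. By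
Dirichlet's unit theorem `logEmbedding` has finite kernel and its image is a lattice, over which
`exp (-η * ‖z‖)` is summable because it decays faster than any power of `‖z‖`. -/

open Filter NumberField.InfinitePlace NumberField.Units NumberField.Units.dirichletUnitTheorem Real

theorem summable_exp_neg_mul_norm {E : Type*} [NormedAddCommGroup E] [NormedSpace ℝ E]
    [FiniteDimensional ℝ E] (L : Submodule ℤ E) [DiscreteTopology L] {c : ℝ} (hc : 0 < c) :
    Summable fun z : L ↦ exp (-c * ‖z‖) := by
  have := FiniteDimensional.proper_real E
  have norm_tendsto : Tendsto (fun z : L ↦ ‖z‖) cofinite atTop :=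
    (tendsto_norm_cocompact_atTop (E := E)).comp
      (AddSubgroup.tendsto_coe_cofinite_of_discrete L.toAddSubgroup ⟨‹DiscreteTopology L›⟩)
  obtain ⟨r, hr⟩ := exists_lt (-Module.finrank ℤ L : ℝ)
  exact summable_of_isBigO (ZLattice.summable_norm_rpow L r hr)
    ((isLittleO_exp_neg_mul_rpow_atTop hc r).isBigO.comp_tendsto norm_tendsto)

section FiniteFibers

variable {M : Type*} [AddCommMonoid M] [TopologicalSpace M] [ContinuousAdd M]

theorem summable_comp_fst {α β : Type*} [Finite β] {f : α → M} (hf : Summable f) :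
    Summable fun p : α × β ↦ f p.1 := by
  classical
  have := Fintype.ofFinite β
  have slice (b : β) : Summable (Function.extend (fun a ↦ (a, b)) f 0) :=
    (summable_extend_zero (Prod.mk_left_injective b)).2 hf
  refine (summable_sum fun b (_ : b ∈ Finset.univ) ↦ slice b).congr fun ⟨a, b⟩ ↦ ?_
  rw [Finset.sum_eq_single b]
  · exact (Prod.mk_left_injective b).extend_apply f 0 a
  · rintro b' - hb
    exact Function.extend_apply' _ _ _ fun ⟨_, h⟩ ↦ hb (congrArg Prod.snd h)
  · simp

theorem summable_comp_quotientGroupMk {G : Type*} [Group G] (N : Subgroup G) [Finite N]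
    {f : G ⧸ N → M} (hf : Summable f) : Summable fun x : G ↦ f x :=
  (Subgroup.groupEquivQuotientProdSubgroup (s := N)).summable_iff.2 (summable_comp_fst hf)

end FiniteFibers

theorem abs_le_sum_posPart_of_sum_eq_zero {ι A : Type*} [AddCommGroup A] [Lattice A]
    [IsOrderedAddMonoid A] {s : Finset ι} {a : ι → A} (ha : ∑ i ∈ s, a i = 0) {j : ι}
    (hj : j ∈ s) : |a j| ≤ ∑ i ∈ s, (a i)⁺ := by
  have sum_negPart : ∑ i ∈ s, (a i)⁻ = ∑ i ∈ s, (a i)⁺ := by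
    rw [eq_comm, ← sub_eq_zero, ← Finset.sum_sub_distrib, ← ha]
    simp only [posPart_sub_negPart]
  rw [abs_le']
  constructor
  · exact (le_posPart _).trans (Finset.single_le_sum (fun i _ ↦ posPart_nonneg (a i)) hj)
  · rw [← sum_negPart]
    exact (neg_le_negPart _).trans (Finset.single_le_sum (fun i _ ↦ negPart_nonneg (a i)) hj)

theorem prod_max_one_rpow {ι : Type*} (s : Finset ι) {a : ι → ℝ} (ha : ∀ i ∈ s, 0 ≤ a i) (y : ℝ) :
    ∏ i ∈ s, (max 1 (a i)) ^ y = exp (y * ∑ i ∈ s, log⁺ (a i)) := by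
  rw [Finset.mul_sum, exp_sum]
  refine Finset.prod_congr rfl fun i hi ↦ ?_
  rw [posLog_eq_log_max_one (ha i hi), rpow_def_of_pos (by positivity), mul_comm]

section NumberField

variable {F : Type*} [Field F] [NumberField F]

theorem sum_infinitePlace_mk {M : Type*} [AddCommMonoid M] (f : InfinitePlace F → M) :
    ∑ φ : F →+* ℂ, f (InfinitePlace.mk φ) = ∑ w, mult w • f w := by
  classical
  simp_rw [← Finset.sum_fiberwise' Finset.univ InfinitePlace.mk f, Finset.sum_const,
    card_filter_mk_eq]

open scoped Classical in
theorem norm_logEmbedding_le_sum_posLog (ε : (𝓞 F)ˣ) :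
    ‖logEmbedding F (Additive.ofMul ε)‖ ≤ ∑ φ : F →+* ℂ, log⁺ ‖φ ε‖ := by
  have sum_posPart : ∑ w : InfinitePlace F, (mult w * log (w ε))⁺ =
      ∑ φ : F →+* ℂ, log⁺ ‖φ ε‖ := by
    rw [eq_comm]
    refine (sum_infinitePlace_mk fun w : InfinitePlace F ↦ log⁺ (w ε)).trans
      (Finset.sum_congr rfl fun w _ ↦ ?_)
    rw [nsmul_eq_mul, posLog_apply, mul_max_of_nonneg _ _ (Nat.cast_nonneg _), mul_zero, max_comm,
      posPart_def]
  rw [pi_norm_le_iff_of_nonneg (Finset.sum_nonneg fun _ _ ↦ posLog_nonneg)]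
  intro w
  rw [logEmbedding_component, norm_eq_abs, ← sum_posPart]
  exact abs_le_sum_posPart_of_sum_eq_zero (sum_mult_mul_log ε) (Finset.mem_univ _)

open scoped Classical in
theorem summable_exp_neg_mul_norm_logEmbedding {c : ℝ} (hc : 0 < c) :
    Summable fun ε : (𝓞 F)ˣ ↦ exp (-c * ‖logEmbedding F (Additive.ofMul ε)‖) := by
  have summable_quotient : Summable fun q : (𝓞 F)ˣ ⧸ torsion F ↦
      exp (-c * ‖logEmbeddingEquiv F (Additive.ofMul q)‖) :=
    (summable_exp_neg_mul_norm (unitLattice F) hc).comp_injective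
      ((logEmbeddingEquiv F).injective.comp Additive.ofMul.injective)
  exact summable_comp_quotientGroupMk (torsion F) summable_quotient

theorem bijective_ofRealHom_comp {ι : Type*} [Fintype ι]
    (hι : Fintype.card ι = Module.finrank ℚ F) {σ : ι → F →+* ℝ} (hσ : Function.Injective σ) :
    Function.Bijective fun i ↦ Complex.ofRealHom.comp (σ i) := by
  refine (Fintype.bijective_iff_injective_and_card _).2 ⟨fun i j h ↦ hσ ?_, ?_⟩
  · exact (RingHom.cancel_left Complex.ofReal_injective).1 h
  · rw [hι, Embeddings.card]

end NumberField

theorem summable_units_prod_max_rpow_general (F : Type*) [Field F] [NumberField F] {η : ℝ}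
    (hη : 0 < η) :
    Summable fun ε : (𝓞 F)ˣ ↦ ∏ φ : F →+* ℂ, (max 1 ‖φ ε‖) ^ (-η) := by
  simp only [prod_max_one_rpow _ fun _ _ ↦ norm_nonneg _]
  refine (summable_exp_neg_mul_norm_logEmbedding hη).of_nonneg_of_le (fun _ ↦ (exp_pos _).le)
    fun ε ↦ exp_le_exp.2 ?_
  exact mul_le_mul_of_nonpos_left (norm_logEmbedding_le_sum_posLog ε) (neg_nonpos.2 hη.le)

/-- Let `F` be a totally real number field of degree `n` over `ℚ`, with the `n` distinct real
embeddings `σ 1, …, σ n : F → ℝ` (an injective family `σ : Fin n → (F →+* ℝ)` with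
`n = [F : ℚ]` automatically consists of all the embeddings of `F` into `ℂ`, so `F` is totally
real). Then for every real `η > 0` the function `ε ↦ ∏ i, max (1, |σ i ε|) ^ (-η)` is summable
over the unit group `(𝓞 F)ˣ`; note `max (1, |σ i ε|) ^ (-η) = |σ i ε| ^ (-η)` when
`|σ i ε| > 1` and `= 1` otherwise, so this is the sum `∑_ε ∏_{i : |σ_i(ε)| > 1} |σ_i(ε)|^{-η}`. -/
theorem summable_units_prod_max_rpow
    (F : Type*) [Field F] [NumberField F]
    (n : ℕ) (hn : n = Module.finrank ℚ F)
    (σ : Fin n → (F →+* ℝ)) (hσ : Function.Injective σ) :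
    ∀ η : ℝ, 0 < η →
      Summable (fun ε : (𝓞 F)ˣ =>
        ∏ i : Fin n, (max 1 |σ i ((ε : 𝓞 F) : F)|) ^ (-η)) := by
  intro η hη
  have σ_bijective := bijective_ofRealHom_comp ((Fintype.card_fin n).trans hn) hσ
  simpa [← σ_bijective.prod_comp] using summable_units_prod_max_rpow_general F hη
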